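/- Let R be an integral domain. If A is a skew PBW extension of R, then A is also an integral domain. -/

import Mathlib

open Finsupp

noncomputable section

variable {R A : Type*}

/-- The ordered monomial `x₁^{α₁} ⋯ xₙ^{αₙ}` in a (possibly noncommutative) ring. -/
def spbwMon [Ring A] {n : ℕ} (x : Fin n → A) (α : Fin n →₀ ℕ) : A :=
  (List.ofFn fun i => x i ^ α i).prod

/-- `A` is a skew Poincaré–Birkhoff–Witt extension of `R` (embedded in `A` via `ι`)
with generators `x 0, …, x (n-1)`:
(i) `R ⊆ A` (via the embedding `ι`);
(ii) `A` is a free left `R`-module with basis the monomials `x^α`, i.e. every element of `A`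
has a unique representation as a finite `R`-linear combination of the monomials;
(iii) for each `i` and each nonzero `r ∈ R` there is a nonzero `c ∈ R` with
`x i * r - c * x i ∈ R`;
(iv) for all `i, j` there is a nonzero `c ∈ R` with
`x j * x i - c * (x i * x j) ∈ R + R x 0 + ⋯ + R x (n-1)`. -/
structure IsSkewPBWExtension [Ring R] [Ring A] (ι : R →+* A) {n : ℕ} (x : Fin n → A) :
    Prop where
  not_mem : ∀ i, x i ∉ Set.range ι
  repr_uniq : ∀ a : A, ∃! c : (Fin n →₀ ℕ) →₀ R, a = c.sum fun α r => ι r * spbwMon x α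
  var_coeff : ∀ i, ∀ r : R, r ≠ 0 →
    ∃ cr : R, cr ≠ 0 ∧ x i * ι r - ι cr * x i ∈ Set.range ι
  var_var : ∀ i j, ∃ cij : R, cij ≠ 0 ∧ ∃ r₀ : R, ∃ rv : Fin n → R,
    x j * x i - ι cij * (x i * x j) = ι r₀ + ∑ k, ι (rv k) * x k

theorem spbw_list_aux [Ring A] : ∀ {n : ℕ} (x : Fin n → A) (a b : Fin n → ℕ) (i : Fin n),
    (∀ k < i, a k = 0) → b i = a i + 1 → (∀ k, k ≠ i → b k = a k) →
    x i * (List.ofFn fun k => x k ^ a k).prod = (List.ofFn fun k => x k ^ b k).prod := by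
  intro n
  induction n with
  | zero => intro x a b i; exact i.elim0
  | succ n ih =>
    intro x a b i h0 h1 h2
    rw [List.ofFn_succ, List.ofFn_succ, List.prod_cons, List.prod_cons]
    induction i using Fin.cases with
    | zero =>
      have : ∀ k : Fin n, b k.succ = a k.succ := fun k => h2 _ (Fin.succ_ne_zero k)
      simp only [this, h1, pow_succ', mul_assoc]
    | succ i =>
      have e0 : a 0 = 0 := h0 0 (Fin.succ_pos i)
      have e1 : b 0 = 0 := by rw [h2 0 (Fin.succ_ne_zero i).symm, e0]
      rw [e0, e1, pow_zero, one_mul, one_mul]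
      exact ih (fun k => x k.succ) (fun k => a k.succ) (fun k => b k.succ) i
        (fun k hk => h0 _ (Fin.succ_lt_succ_iff.2 hk)) h1
        (fun k hk => h2 _ (fun h => hk (Fin.succ_injective _ h)))

theorem spbwMon_mul_left [Ring A] {n : ℕ} (x : Fin n → A) (α : Fin n →₀ ℕ) (i : Fin n)
    (h : ∀ k < i, α k = 0) : x i * spbwMon x α = spbwMon x (single i 1 + α) := by
  refine spbw_list_aux x α _ i h ?_ ?_
  · simp [add_comm]
  · intro k hk
    simp [Finsupp.single_apply, hk.symm]

theorem spbwMon_zero [Ring A] {n : ℕ} (x : Fin n → A) : spbwMon x 0 = 1 := by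
  simp [spbwMon]

/-- degree-lexicographic strict order -/
def spbwLt {n : ℕ} (α β : Fin n →₀ ℕ) : Prop :=
  (MonomialOrder.degLex (σ := Fin n)).toSyn α < MonomialOrder.degLex.toSyn β

theorem spbwLt_trans {n : ℕ} {α β γ : Fin n →₀ ℕ} (h : spbwLt α β) (h' : spbwLt β γ) :
    spbwLt α γ := lt_trans h h'

theorem spbwLt_add_left {n : ℕ} {α β : Fin n →₀ ℕ} (γ : Fin n →₀ ℕ) (h : spbwLt α β) :
    spbwLt (γ + α) (γ + β) := by
  unfold spbwLt at *
  simpa using h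

theorem spbwLt_add_right {n : ℕ} {α β : Fin n →₀ ℕ} (γ : Fin n →₀ ℕ) (h : spbwLt α β) :
    spbwLt (α + γ) (β + γ) := by
  unfold spbwLt at *
  simpa using h

theorem spbwLt_of_degree {n : ℕ} {α β : Fin n →₀ ℕ} (h : α.degree < β.degree) :
    spbwLt α β := by
  unfold spbwLt
  rw [MonomialOrder.degLex_lt_iff, DegLex.lt_iff]
  exact Or.inl h

theorem spbwLt_single {n : ℕ} {i j : Fin n} (h : j < i) :
    spbwLt (single i 1) (single j 1) := by
  unfold spbwLt
  rw [MonomialOrder.degLex_lt_iff]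
  exact DegLex.single_lt_iff.2 h

theorem spbwLt_wf {n : ℕ} : WellFounded (spbwLt (n := n)) :=
  InvImage.wf _ (wellFounded_lt)

/-- span of smaller monomials -/
def spbwG [Ring R] [Ring A] (ι : R →+* A) {n : ℕ} (x : Fin n → A) (γ : Fin n →₀ ℕ) :
    AddSubgroup A :=
  AddSubgroup.closure {a | ∃ (r : R) (δ : Fin n →₀ ℕ), spbwLt δ γ ∧ a = ι r * spbwMon x δ}

section
variable [CommRing R] [IsDomain R] [Ring A] {ι : R →+* A} {n : ℕ} {x : Fin n → A}

theorem spbwG_mem (r : R) {δ γ : Fin n →₀ ℕ} (h : spbwLt δ γ) :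
    ι r * spbwMon x δ ∈ spbwG ι x γ := AddSubgroup.subset_closure ⟨r, δ, h, rfl⟩

theorem spbwG_mono {δ γ : Fin n →₀ ℕ} (h : spbwLt δ γ) : spbwG ι x δ ≤ spbwG ι x γ := by
  refine (AddSubgroup.closure_le _).2 ?_
  rintro _ ⟨r, η, hη, rfl⟩
  exact spbwG_mem r (spbwLt_trans hη h)

theorem spbwG_map_left {γ γ' : Fin n →₀ ℕ} (b : A)
    (h : ∀ (r : R) δ, spbwLt δ γ → b * (ι r * spbwMon x δ) ∈ spbwG ι x γ') {a : A}
    (ha : a ∈ spbwG ι x γ) : b * a ∈ spbwG ι x γ' := by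
  have : spbwG ι x γ ≤ (spbwG ι x γ').comap (AddMonoidHom.mulLeft b) := by
    refine (AddSubgroup.closure_le _).2 ?_
    rintro _ ⟨r, η, hη, rfl⟩
    exact h r η hη
  exact this ha

theorem spbwG_map_right {γ γ' : Fin n →₀ ℕ} (b : A)
    (h : ∀ (r : R) δ, spbwLt δ γ → (ι r * spbwMon x δ) * b ∈ spbwG ι x γ') {a : A}
    (ha : a ∈ spbwG ι x γ) : a * b ∈ spbwG ι x γ' := by
  have : spbwG ι x γ ≤ (spbwG ι x γ').comap (AddMonoidHom.mulRight b) := by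
    refine (AddSubgroup.closure_le _).2 ?_
    rintro _ ⟨r, η, hη, rfl⟩
    exact h r η hη
  exact this ha

theorem spbwG_smul (s : R) {γ : Fin n →₀ ℕ} {a : A}
    (ha : a ∈ spbwG ι x γ) : ι s * a ∈ spbwG ι x γ := by
  refine spbwG_map_left _ (fun r δ hδ => ?_) ha
  rw [← mul_assoc, ← map_mul]
  exact spbwG_mem _ hδ

/-- leading monomial of `x i * x^α`. -/
def spbwP (ι : R →+* A) (x : Fin n → A) (i : Fin n) (α : Fin n →₀ ℕ) : Prop :=
  ∃ c : R, c ≠ 0 ∧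
    x i * spbwMon x α - ι c * spbwMon x (single i 1 + α) ∈ spbwG ι x (single i 1 + α)

theorem spbwLt_single_add (i : Fin n) (α : Fin n →₀ ℕ) : spbwLt α (single i 1 + α) := by
  apply spbwLt_of_degree
  simp [map_add]

/-- `x i * (r x^α)`. -/
theorem spbwP_coeff (h : IsSkewPBWExtension ι x) {i : Fin n} {α : Fin n →₀ ℕ}
    (hP : spbwP ι x i α) (r : R) (hr : r ≠ 0) : ∃ c : R, c ≠ 0 ∧
    x i * (ι r * spbwMon x α) - ι c * spbwMon x (single i 1 + α) ∈ spbwG ι x (single i 1 + α) := by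
  obtain ⟨c, hc, hm⟩ := hP
  obtain ⟨s, hs, d, hd⟩ := h.var_coeff i r hr
  refine ⟨s * c, mul_ne_zero hs hc, ?_⟩
  have e : x i * ι r = ι s * x i + ι d := by rw [hd]; abel
  have : x i * (ι r * spbwMon x α) - ι (s * c) * spbwMon x (single i 1 + α)
      = ι s * (x i * spbwMon x α - ι c * spbwMon x (single i 1 + α)) + ι d * spbwMon x α := by
    rw [← mul_assoc, e, map_mul]; noncomm_ring
  rw [this]
  exact add_mem (spbwG_smul _ hm) (spbwG_mem _ (spbwLt_single_add i α))

theorem spbwP_mem (h : IsSkewPBWExtension ι x) {i : Fin n} {α γ : Fin n →₀ ℕ}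
    (hP : spbwP ι x i α) (r : R) (hγ : spbwLt (single i 1 + α) γ) :
    x i * (ι r * spbwMon x α) ∈ spbwG ι x γ := by
  by_cases hr : r = 0
  · simp [hr, zero_mem]
  obtain ⟨c, hc, hm⟩ := spbwP_coeff h hP r hr
  have := add_mem (spbwG_mono hγ hm) (spbwG_mem (ι := ι) (x := x) c hγ)
  simpa using this

theorem spbwP_all (h : IsSkewPBWExtension ι x) (α : Fin n →₀ ℕ) : ∀ i, spbwP ι x i α := by
  induction α using spbwLt_wf.induction with
  | _ α ih =>
  intro i
  by_cases hi : ∀ k < i, α k = 0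
  · refine ⟨1, one_ne_zero, ?_⟩
    rw [spbwMon_mul_left x α i hi]
    simp [zero_mem]
  push Not at hi
  obtain ⟨j, ⟨hji, hj⟩, hmin⟩ : ∃ j, (j < i ∧ α j ≠ 0) ∧ ∀ k < j, α k = 0 := by
    have hne : α.support.Nonempty := by
      obtain ⟨k, _, hk⟩ := hi
      exact ⟨k, by simpa using hk⟩
    obtain ⟨k, hki, hk⟩ := hi
    refine ⟨α.support.min' hne, ⟨lt_of_le_of_lt (Finset.min'_le _ _ (by simpa using hk)) hki, ?_⟩, ?_⟩
    · simpa using Finset.min'_mem _ hne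
    · intro l hl
      by_contra hl'
      exact absurd (Finset.min'_le α.support l (by simpa using hl')) (not_le.2 hl)
  obtain ⟨α', rfl⟩ : ∃ α', α = single j 1 + α' := by
    refine ⟨α - single j 1, ?_⟩
    rw [add_tsub_cancel_of_le]
    simpa [Finsupp.single_le_iff] using Nat.one_le_iff_ne_zero.2 hj
  have hα' : ∀ k < j, α' k = 0 := fun k hk => by
    have := hmin k hk
    simp at this
    exact this.2
  have hlt : spbwLt α' (single j 1 + α') := spbwLt_single_add j α'
  unfold spbwP
  rw [← spbwMon_mul_left x α' j hα']
  obtain ⟨c, hc, r₀, rv, hv⟩ := h.var_var j i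
  obtain ⟨c', hc', hm⟩ := ih α' hlt i
  have hlt2 : spbwLt (single i 1 + α') (single j 1 + α') :=
    spbwLt_add_right _ (spbwLt_single hji)
  have hPj := ih _ hlt2 j
  -- exact value
  have hex : x j * spbwMon x (single i 1 + α') = spbwMon x (single j 1 + (single i 1 + α')) := by
    apply spbwMon_mul_left
    intro k hk
    simp [hα' k hk, (hk.trans hji).ne]
  have hcomm : single i 1 + (single j 1 + α') = single j 1 + (single i 1 + α') := by abel
  rw [hcomm]
  obtain ⟨s, hs, d, hd⟩ := h.var_coeff j c' hc'
  have e : x j * ι c' = ι s * x j + ι d := by rw [hd]; abel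
  have e2 : x i * x j = ι c * (x j * x i) + ι r₀ + ∑ k, ι (rv k) * x k := by
    rw [add_assoc, ← hv]; abel
  refine ⟨c * s, mul_ne_zero hc hs, ?_⟩
  set γ := single j 1 + (single i 1 + α') with hγ
  have key : x i * (x j * spbwMon x α') - ι (c * s) * spbwMon x γ
      = ι c * (x j * (x i * spbwMon x α' - ι c' * spbwMon x (single i 1 + α')))
        + ι (c * d) * spbwMon x (single i 1 + α')
        + ι r₀ * spbwMon x α' + ∑ k, ι (rv k) * (x k * (ι 1 * spbwMon x α')) := by
    have t : x j * (ι c' * spbwMon x (single i 1 + α'))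
        = ι s * spbwMon x γ + ι d * spbwMon x (single i 1 + α') := by
      rw [← mul_assoc, e, add_mul, mul_assoc, hex]
    rw [← mul_assoc, e2, mul_sub, t, add_mul, add_mul, Finset.sum_mul]
    simp only [map_mul, map_one, one_mul, mul_assoc, mul_sub, mul_add]
    abel
  rw [key]
  refine add_mem (add_mem (add_mem ?_ ?_) ?_) (sum_mem fun k _ => ?_)
  · refine spbwG_smul _ (spbwG_map_left _ (fun r δ hδ => ?_) hm)
    exact spbwP_mem h (ih δ (spbwLt_trans hδ hlt2) j) r (spbwLt_add_left _ hδ)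
  · exact spbwG_mem _ (spbwLt_single_add _ _)
  · exact spbwG_mem _ (spbwLt_trans (spbwLt_single_add _ _) (spbwLt_single_add _ _))
  · refine spbwG_smul _ (spbwP_mem h (ih α' hlt k) _ ?_)
    apply spbwLt_of_degree
    simp [hγ, map_add]

theorem spbw_mul (h : IsSkewPBWExtension ι x) (β : Fin n →₀ ℕ) (r : R) (hr : r ≠ 0)
    (α : Fin n →₀ ℕ) : ∃ c : R, c ≠ 0 ∧
      spbwMon x α * (ι r * spbwMon x β) - ι c * spbwMon x (α + β) ∈ spbwG ι x (α + β) := by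
  induction α using spbwLt_wf.induction with
  | _ α ih =>
  by_cases h0 : α = 0
  · subst h0
    exact ⟨r, hr, by simp [spbwMon_zero, zero_mem]⟩
  have hne : α.support.Nonempty := by simpa using h0
  obtain ⟨j, hj, hmin⟩ : ∃ j, α j ≠ 0 ∧ ∀ k < j, α k = 0 := by
    refine ⟨α.support.min' hne, ?_, ?_⟩
    · simpa using Finset.min'_mem _ hne
    · intro l hl
      by_contra hl'
      exact absurd (Finset.min'_le α.support l (by simpa using hl')) (not_le.2 hl)
  obtain ⟨α', rfl⟩ : ∃ α', α = single j 1 + α' := by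
    refine ⟨α - single j 1, ?_⟩
    rw [add_tsub_cancel_of_le]
    simpa [Finsupp.single_le_iff] using Nat.one_le_iff_ne_zero.2 hj
  have hα' : ∀ k < j, α' k = 0 := fun k hk => by
    have := hmin k hk
    simp at this
    exact this.2
  obtain ⟨c, hc, hm⟩ := ih α' (spbwLt_single_add j α')
  obtain ⟨c', hc', hm'⟩ := spbwP_coeff h (spbwP_all h (α' + β) j) c hc
  refine ⟨c', hc', ?_⟩
  rw [← spbwMon_mul_left x α' j hα', add_assoc]
  have := add_mem (spbwG_map_left (γ' := single j 1 + (α' + β)) (x j) (fun r δ hδ =>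
    spbwP_mem h (spbwP_all h δ j) r (spbwLt_add_left _ hδ)) hm) hm'
  convert this using 1
  noncomm_ring

theorem spbw_mul_mem (h : IsSkewPBWExtension ι x) {α β γ : Fin n →₀ ℕ} (s r : R)
    (hγ : spbwLt (α + β) γ) :
    ι s * spbwMon x α * (ι r * spbwMon x β) ∈ spbwG ι x γ := by
  by_cases hr : r = 0
  · simp [hr, zero_mem]
  obtain ⟨c, hc, hm⟩ := spbw_mul h β r hr α
  have := spbwG_smul s (add_mem (spbwG_mono hγ hm) (spbwG_mem (ι := ι) (x := x) c hγ))
  simpa [mul_assoc] using this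

theorem spbwG_repr {γ : Fin n →₀ ℕ} {a : A} (ha : a ∈ spbwG ι x γ) :
    ∃ c : (Fin n →₀ ℕ) →₀ R, (a = c.sum fun α r => ι r * spbwMon x α) ∧ c γ = 0 := by
  induction ha using AddSubgroup.closure_induction with
  | mem a ha =>
    obtain ⟨r, δ, hδ, rfl⟩ := ha
    refine ⟨single δ r, by simp, ?_⟩
    rw [Finsupp.single_apply, if_neg]
    rintro rfl
    exact lt_irrefl _ hδ
  | zero => exact ⟨0, by simp, rfl⟩
  | add a b _ _ iha ihb =>
    obtain ⟨c, rfl, hc⟩ := iha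
    obtain ⟨d, rfl, hd⟩ := ihb
    refine ⟨c + d, ?_, by simp [hc, hd]⟩
    rw [Finsupp.sum_add_index'] <;> simp [add_mul]
  | neg a _ iha =>
    obtain ⟨c, rfl, hc⟩ := iha
    refine ⟨-c, ?_, by simp [hc]⟩
    rw [Finsupp.sum_neg_index] <;> simp [Finsupp.sum]

theorem spbw_not_mem (h : IsSkewPBWExtension ι x) {γ : Fin n →₀ ℕ} {r : R} (hr : r ≠ 0) :
    ι r * spbwMon x γ ∉ spbwG ι x γ := by
  intro hm
  obtain ⟨c, hc, h0⟩ := spbwG_repr hm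
  have : single γ r = c := (h.repr_uniq (ι r * spbwMon x γ)).unique (by simp) hc
  rw [← this] at h0
  simp at h0
  exact hr h0

theorem spbw_lead (h : IsSkewPBWExtension ι x) (a : A) (ha : a ≠ 0) :
    ∃ (α : Fin n →₀ ℕ) (r : R) (b : A), r ≠ 0 ∧ b ∈ spbwG ι x α ∧ a = ι r * spbwMon x α + b := by
  obtain ⟨c, hc, -⟩ := h.repr_uniq a
  have hne : c.support.Nonempty := by
    rw [Finsupp.support_nonempty_iff]
    rintro rfl
    exact ha (by simpa using hc)
  obtain ⟨α, hα, hmax⟩ := Finset.exists_max_image c.support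
    (fun α => (MonomialOrder.degLex (σ := Fin n)).toSyn α) hne
  refine ⟨α, c α, ∑ δ ∈ c.support.erase α, ι (c δ) * spbwMon x δ, by simpa using hα,
    sum_mem fun δ hδ => spbwG_mem _ ?_, ?_⟩
  · rw [Finset.mem_erase] at hδ
    exact lt_of_le_of_ne (hmax δ hδ.2) (fun e => hδ.1 (MonomialOrder.degLex.toSyn.injective e))
  · rw [hc, Finsupp.sum, Finset.add_sum_erase _ (fun δ => ι (c δ) * spbwMon x δ) hα]

end

/-- If `R` is an integral domain and `A` is a skew PBW extension of `R`,
then `A` is a domain. -/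
theorem skewPBW_isDomain [CommRing R] [IsDomain R] [Ring A] (ι : R →+* A) {n : ℕ}
    (x : Fin n → A) (h : IsSkewPBWExtension ι x) : IsDomain A := by
  have hnt : Nontrivial A := by
    by_contra hn
    rw [not_nontrivial_iff_subsingleton] at hn
    exact spbw_not_mem h (γ := 0) (one_ne_zero (α := R)) (by
      rw [Subsingleton.elim (ι 1 * spbwMon x 0) 0]; exact zero_mem _)
  have hz : NoZeroDivisors A := by
    refine ⟨fun {a b} hab => ?_⟩
    by_contra! hcon
    obtain ⟨α, r, a', hr, ha', rfl⟩ := spbw_lead h a hcon.1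
    obtain ⟨β, s, b', hs, hb', rfl⟩ := spbw_lead h b hcon.2
    obtain ⟨c, hc, hm⟩ := spbw_mul h β s hs α
    apply spbw_not_mem h (γ := α + β) (mul_ne_zero hr hc)
    have m1 : ι r * spbwMon x α * b' ∈ spbwG ι x (α + β) :=
      spbwG_map_left _ (fun t δ hδ => spbw_mul_mem h _ _ (spbwLt_add_left _ hδ)) hb'
    have m2 : a' * (ι s * spbwMon x β) ∈ spbwG ι x (α + β) :=
      spbwG_map_right _ (fun t δ hδ => spbw_mul_mem h _ _ (spbwLt_add_right _ hδ)) ha'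
    have m3 : a' * b' ∈ spbwG ι x (α + β) :=
      spbwG_map_left _ (fun t δ hδ => spbwG_map_right _ (fun t' δ' hδ' =>
        spbw_mul_mem h _ _ (spbwLt_trans (spbwLt_add_right _ hδ') (spbwLt_add_left _ hδ))) ha') hb'
    have m4 := neg_mem (add_mem (add_mem (add_mem m1 m2) m3) (spbwG_smul r hm))
    have : ι (r * c) * spbwMon x (α + β) = -(ι r * spbwMon x α * b' + a' * (ι s * spbwMon x β)
        + a' * b' + ι r * (spbwMon x α * (ι s * spbwMon x β) - ι c * spbwMon x (α + β)))
        + (ι r * spbwMon x α + a') * (ι s * spbwMon x β + b') := by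
      rw [map_mul]; noncomm_ring
    rw [this, hab, add_zero]
    exact m4
  exact NoZeroDivisors.to_isDomain A
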